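/- The family of 6-element subsets of Z/55 ∪ (Z/55)' ∪ {∞} obtained as follows is a Steiner system S(2,6,111): take the orbits under the action of Z/55 (acting by addition simultaneously on both copies of Z/55 and fixing ∞) of the base blocks [0,11,22,33,44,∞], [0',11',22',33',44',∞], [0,1,4,49,0',13'], [0,2,15,27,31',37'], [0,5,19,39,30',47'], [0,8,31,32',34',48'], [0,9,38,27',45',52'], [0,18,2',23',33',38'], [0,21',41',49',50',53'], where unprimed elements lie in the first copy of Z/55, primed elements in the second copy, and Z/55 acts by n·x = x+n on each copy. -/

import Mathlib

/-- The point set: two copies of Z/55 together with one extra point ∞ (= `none`). -/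
abbrev PtsS26111 := Option (ZMod 55 ⊕ ZMod 55)

/-- Translation by n on both copies of Z/55, fixing ∞. -/
def trS26111 (n : ZMod 55) : PtsS26111 → PtsS26111
  | .some (.inl a) => .some (.inl (a + n))
  | .some (.inr a) => .some (.inr (a + n))
  | .none => .none

/-- First copy of Z/55 (unprimed points). -/
def u55 (a : ℕ) : PtsS26111 := .some (.inl (a : ZMod 55))

/-- Second copy of Z/55 (primed points). -/
def p55 (a : ℕ) : PtsS26111 := .some (.inr (a : ZMod 55))

/-- The point ∞. -/
def inf55 : PtsS26111 := .none

/-- The nine base blocks. -/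
def baseS26111 : Finset (Finset PtsS26111) :=
  { {u55 0, u55 11, u55 22, u55 33, u55 44, inf55},
    {p55 0, p55 11, p55 22, p55 33, p55 44, inf55},
    {u55 0, u55 1, u55 4, u55 49, p55 0, p55 13},
    {u55 0, u55 2, u55 15, u55 27, p55 31, p55 37},
    {u55 0, u55 5, u55 19, u55 39, p55 30, p55 47},
    {u55 0, u55 8, u55 31, p55 32, p55 34, p55 48},
    {u55 0, u55 9, u55 38, p55 27, p55 45, p55 52},
    {u55 0, u55 18, p55 2, p55 23, p55 33, p55 38},
    {u55 0, p55 21, p55 41, p55 49, p55 50, p55 53} }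

/-- All translates of the base blocks. -/
def blocksS26111 : Finset (Finset PtsS26111) :=
  Finset.univ.biUnion (fun n : ZMod 55 => baseS26111.image (fun b => b.image (trS26111 n)))

/-! Every point other than `∞` is a translate of the zero `z` of one of the two copies of `Z/55`, so
by translation and symmetry it is enough to treat the pairs `{z, q}` for these two points `z`. The
block `B - g` contains `z` exactly when `z + g ∈ B`, so the blocks through `z` can be read off from
the base blocks, and it remains to see that, with `z` removed, they partition the other 110 points.
Forming the set of these blocks takes care of the two short orbits, where the same block arises from
several translations. -/

open scoped Finset Pointwise

instance optionAddAction {M α : Type*} [AddMonoid M] [AddAction M α] : AddAction M (Option α) where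
  zero_vadd
    | none => rfl
    | some a => congrArg some (zero_vadd M a)
  add_vadd m n
    | none => rfl
    | some a => congrArg some (add_vadd m n a)

/-- The pairwise balance condition (with `λ = 1`) of a Steiner system at the pair `{p, q}`: exactly
one block of the family `𝓓` contains both points. -/
def CoveredOnce {X : Type*} (𝓓 : Finset (Finset X)) (p q : X) : Prop :=
  ∃! b, b ∈ 𝓓 ∧ p ∈ b ∧ q ∈ b

theorem CoveredOnce.symm {X : Type*} {𝓓 : Finset (Finset X)} {p q : X}
    (h : CoveredOnce 𝓓 p q) : CoveredOnce 𝓓 q p := by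
  simpa only [CoveredOnce, and_comm (a := q ∈ _)] using h

section InvariantFamily

variable {G X : Type*} [AddGroup G] [AddAction G X] [DecidableEq X] {𝓓 : Finset (Finset X)}

theorem CoveredOnce.vadd (h𝓓 : ∀ g : G, ∀ b ∈ 𝓓, g +ᵥ b ∈ 𝓓) {p q : X}
    (h : CoveredOnce 𝓓 p q) (g : G) : CoveredOnce 𝓓 (g +ᵥ p) (g +ᵥ q) := by
  obtain ⟨b, ⟨hb, hp, hq⟩, b_unique⟩ := h
  refine ⟨g +ᵥ b, ⟨h𝓓 g b hb, Finset.vadd_mem_vadd_finset hp, Finset.vadd_mem_vadd_finset hq⟩, ?_⟩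
  rintro c ⟨hc, hpc, hqc⟩
  rw [← neg_vadd_eq_iff]
  exact b_unique (-g +ᵥ c) ⟨h𝓓 (-g) c hc, Finset.mem_neg_vadd_finset_iff.mpr hpc,
    Finset.mem_neg_vadd_finset_iff.mpr hqc⟩

theorem CoveredOnce.of_mem_orbit (h𝓓 : ∀ g : G, ∀ b ∈ 𝓓, g +ᵥ b ∈ 𝓓) {z p q : X}
    (hz : ∀ r ≠ z, CoveredOnce 𝓓 z r) (hp : p ∈ AddAction.orbit G z) (hpq : p ≠ q) :
    CoveredOnce 𝓓 p q := by
  obtain ⟨g, rfl⟩ := hp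
  have hq : -g +ᵥ q ≠ z := fun h => hpq (neg_vadd_eq_iff.mp h).symm
  simpa only [vadd_neg_vadd] using (hz _ hq).vadd h𝓓 g

theorem coveredOnce_of_subsingleton_compl_orbits (h𝓓 : ∀ g : G, ∀ b ∈ 𝓓, g +ᵥ b ∈ 𝓓) {R : Set X}
    (hR : (⋃ z ∈ R, AddAction.orbit G z)ᶜ.Subsingleton)
    (hcov : ∀ z ∈ R, ∀ r ≠ z, CoveredOnce 𝓓 z r) {p q : X} (hpq : p ≠ q) :
    CoveredOnce 𝓓 p q := by
  have of_mem {p q : X} (hp : p ∈ ⋃ z ∈ R, AddAction.orbit G z) (hpq : p ≠ q) :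
      CoveredOnce 𝓓 p q := by
    obtain ⟨z, hz, hpz⟩ := Set.mem_iUnion₂.mp hp
    exact .of_mem_orbit h𝓓 (hcov z hz) hpz hpq
  by_cases hp : p ∈ ⋃ z ∈ R, AddAction.orbit G z
  · exact of_mem hp hpq
  · by_cases hq : q ∈ ⋃ z ∈ R, AddAction.orbit G z
    · exact (of_mem hq hpq.symm).symm
    · exact absurd (hR hp hq) hpq

end InvariantFamily

section Translates

variable (G : Type*) {X : Type*} [AddGroup G] [Fintype G] [AddAction G X] [DecidableEq X]

/-- The development of a family `𝓑` of base blocks: all translates of its members under `G`, as a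
set, so that a block with nontrivial stabilizer is not counted repeatedly. -/
def translates (𝓑 : Finset (Finset X)) : Finset (Finset X) :=
  Finset.univ.biUnion fun g : G => 𝓑.image (g +ᵥ ·)

/-- The translates of the base blocks `𝓑` that contain `z`, in a form that is cheap to evaluate:
only the translations that move a point of the block to `z` are applied. -/
def translatesThrough (𝓑 : Finset (Finset X)) (z : X) : Finset (Finset X) :=
  𝓑.biUnion fun B => ({g : G | g +ᵥ z ∈ B} : Finset G).image fun g : G => -g +ᵥ B

variable {G} {𝓑 : Finset (Finset X)}

theorem mem_translates {b : Finset X} :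
    b ∈ translates G 𝓑 ↔ ∃ g : G, ∃ B ∈ 𝓑, g +ᵥ B = b := by
  simp only [translates, Finset.mem_biUnion, Finset.mem_univ, true_and, Finset.mem_image]

theorem vadd_mem_translates (g : G) {b : Finset X} (hb : b ∈ translates G 𝓑) :
    g +ᵥ b ∈ translates G 𝓑 := by
  obtain ⟨h, B, hB, rfl⟩ := mem_translates.mp hb
  exact mem_translates.mpr ⟨g + h, B, hB, add_vadd g h B⟩

theorem card_of_mem_translates {k : ℕ} (h𝓑 : ∀ B ∈ 𝓑, #B = k) {b : Finset X}
    (hb : b ∈ translates G 𝓑) : #b = k := by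
  obtain ⟨g, B, hB, rfl⟩ := mem_translates.mp hb
  rw [Finset.card_vadd_finset, h𝓑 B hB]

theorem mem_translatesThrough {z : X} {b : Finset X} :
    b ∈ translatesThrough G 𝓑 z ↔ b ∈ translates G 𝓑 ∧ z ∈ b := by
  simp only [translatesThrough, mem_translates, Finset.mem_biUnion, Finset.mem_image,
    Finset.mem_filter, Finset.mem_univ, true_and]
  constructor
  · rintro ⟨B, hB, g, hg, rfl⟩
    exact ⟨⟨-g, B, hB, rfl⟩, Finset.mem_neg_vadd_finset_iff.mpr hg⟩
  · rintro ⟨⟨g, B, hB, rfl⟩, hz⟩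
    exact ⟨B, hB, -g, Finset.neg_vadd_mem_iff.mpr hz, by rw [neg_neg]⟩

theorem coveredOnce_translates_iff {z q : X} :
    CoveredOnce (translates G 𝓑) z q ↔ #{b ∈ translatesThrough G 𝓑 z | q ∈ b} = 1 := by
  simp only [CoveredOnce, Finset.card_eq_one, Finset.singleton_iff_unique_mem, Finset.mem_filter,
    mem_translatesThrough, and_assoc]

end Translates

theorem trS26111_eq_vadd (n : ZMod 55) : trS26111 n = (n +ᵥ ·) := by
  funext p
  rcases p with _ | a | a
  · rfl
  · exact congrArg (some ∘ Sum.inl) (add_comm a n)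
  · exact congrArg (some ∘ Sum.inr) (add_comm a n)

theorem blocksS26111_eq_translates : blocksS26111 = translates (ZMod 55) baseS26111 := by
  simp only [blocksS26111, trS26111_eq_vadd]
  rfl

theorem card_of_mem_baseS26111 : ∀ B ∈ baseS26111, #B = 6 := by
  simp only [baseS26111, Finset.forall_mem_insert, Finset.mem_singleton, forall_eq]
  decide +kernel

theorem subsingleton_compl_orbits_zero :
    (⋃ z ∈ ({u55 0, p55 0} : Set PtsS26111), AddAction.orbit (ZMod 55) z)ᶜ.Subsingleton := by
  refine Set.subsingleton_of_subset_singleton (a := inf55) ?_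
  rw [Set.compl_subset_comm]
  rintro (_ | a | a) hp
  · exact absurd rfl hp
  · exact Set.mem_biUnion (Set.mem_insert _ _) ⟨a, congrArg (some ∘ Sum.inl) (add_zero a)⟩
  · exact Set.mem_biUnion (Set.mem_insert_of_mem _ rfl) ⟨a, congrArg (some ∘ Sum.inr) (add_zero a)⟩

theorem card_translatesThrough_u55_zero : ∀ q ≠ u55 0,
    #{b ∈ translatesThrough (ZMod 55) baseS26111 (u55 0) | q ∈ b} = 1 := by
  decide +kernel

theorem card_translatesThrough_p55_zero : ∀ q ≠ p55 0,
    #{b ∈ translatesThrough (ZMod 55) baseS26111 (p55 0) | q ∈ b} = 1 := by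
  decide +kernel

/-- The translates of the nine base blocks form a Steiner system S(2,6,111). -/
theorem blocksS26111_is_steiner :
    Fintype.card PtsS26111 = 111 ∧
    (∀ b ∈ blocksS26111, b.card = 6) ∧
    (∀ p q : PtsS26111, p ≠ q → ∃! b, b ∈ blocksS26111 ∧ p ∈ b ∧ q ∈ b) := by
  rw [blocksS26111_eq_translates]
  refine ⟨by simp [ZMod.card], fun b => card_of_mem_translates card_of_mem_baseS26111, ?_⟩
  intro p q hpq
  refine coveredOnce_of_subsingleton_compl_orbits (fun g b => vadd_mem_translates g)
    subsingleton_compl_orbits_zero ?_ hpq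
  rintro z (rfl | rfl) r hr
  · exact coveredOnce_translates_iff.mpr (card_translatesThrough_u55_zero r hr)
  · exact coveredOnce_translates_iff.mpr (card_translatesThrough_p55_zero r hr)
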